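/- Let λ ≥ 1 and let ξ, ξ₁ be real numbers with ξ ≠ 0, ξ₁ ≠ 0 and ξ₂ := ξ − ξ₁ ≠ 0. If |1 + 4/(3λ⁴ ξ² ξ₁ ξ₂)| ≤ 1/2, then either (ξ − √(ξ² + 32/(3λ⁴ξ²)))/2 ≤ ξ₁ ≤ (ξ − √(ξ² + 32/(9λ⁴ξ²)))/2, or (ξ + √(ξ² + 32/(9λ⁴ξ²)))/2 ≤ ξ₁ ≤ (ξ + √(ξ² + 32/(3λ⁴ξ²)))/2. -/

import Mathlib

/-!
With `a = 4 / (3λ⁴ξ²)` the factor is `1 + a / (ξ₁ξ₂)`. For it to be at most `δ < 1` in absolute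
value, the product `ξ₁ξ₂` must be negative and comparable to `-a`: precisely,
`a / (1 + δ) ≤ -ξ₁ξ₂ ≤ a / (1 - δ)`. Since `(2ξ₁ - ξ)² = ξ² - 4ξ₁ξ₂`, these bounds confine
`|2ξ₁ - ξ|` between two square roots, and the sign of `2ξ₁ - ξ` selects the interval.
-/

theorem abs_one_add_div_le_iff {K : Type*} [Field K] [LinearOrder K] [IsStrictOrderedRing K]
    {a q δ : K} (ha : 0 < a) (hq : q ≠ 0) (hδ : |δ| < 1) :
    |1 + a / q| ≤ δ ↔ -q ∈ Set.Icc (a / (1 + δ)) (a / (1 - δ)) := by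
  obtain ⟨hδ_gt, hδ_lt⟩ := abs_lt.mp hδ
  have hadd : 0 < 1 + δ := by linarith
  have hsub : 0 < 1 - δ := by linarith
  rw [one_add_div hq, abs_div, div_le_iff₀ (abs_pos.mpr hq), Set.mem_Icc, div_le_iff₀ hadd,
    le_div_iff₀ hsub, abs_le]
  rcases hq.lt_or_gt with hneg | hpos
  · rw [abs_of_neg hneg]
    constructor <;> rintro ⟨hlower, hupper⟩ <;> constructor <;> linarith
  · have hδq : 0 < q * (1 - δ) := mul_pos hpos hsub
    have hq_add : 0 < q * (1 + δ) := mul_pos hpos hadd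
    rw [abs_of_pos hpos]
    constructor <;> rintro ⟨hlower, hupper⟩ <;> linarith

theorem abs_mem_Icc_iff {G : Type*} [AddCommGroup G] [LinearOrder G] [IsOrderedAddMonoid G]
    {a b t : G} (ha : 0 ≤ a) :
    |t| ∈ Set.Icc a b ↔ t ∈ Set.Icc (-b) (-a) ∨ t ∈ Set.Icc a b := by
  constructor
  · intro h
    rcases abs_choice t with ht | ht <;> rw [ht] at h
    · exact Or.inr h
    · exact Or.inl (Set.neg_mem_Icc_iff.mp h)
  · rintro (h | h)
    · rw [abs_of_nonpos (h.2.trans (neg_nonpos.mpr ha))]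
      exact Set.neg_mem_Icc_iff.mpr h
    · rwa [abs_of_nonneg (ha.trans h.1)]

theorem abs_mem_Icc_sqrt_iff {u v t : ℝ} (hv : 0 ≤ v) :
    |t| ∈ Set.Icc √u √v ↔ t ^ 2 ∈ Set.Icc u v := by
  rw [Set.mem_Icc, Set.mem_Icc, Real.sqrt_le_left (abs_nonneg t), Real.le_sqrt (abs_nonneg t) hv,
    sq_abs]

theorem neg_mul_sub_mem_Icc_iff {s x b c : ℝ} (hc : 0 ≤ s ^ 2 + 4 * c) :
    -(x * (s - x)) ∈ Set.Icc b c ↔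
      x ∈ Set.Icc ((s - √(s ^ 2 + 4 * c)) / 2) ((s - √(s ^ 2 + 4 * b)) / 2) ∨
        x ∈ Set.Icc ((s + √(s ^ 2 + 4 * b)) / 2) ((s + √(s ^ 2 + 4 * c)) / 2) := by
  have hsq : (2 * x - s) ^ 2 = s ^ 2 + 4 * -(x * (s - x)) := by ring
  calc
    _ ↔ (2 * x - s) ^ 2 ∈ Set.Icc (s ^ 2 + 4 * b) (s ^ 2 + 4 * c) := by
      simp only [hsq, Set.mem_Icc, add_le_add_iff_left, mul_le_mul_iff_right₀ four_pos]
    _ ↔ |2 * x - s| ∈ Set.Icc √(s ^ 2 + 4 * b) √(s ^ 2 + 4 * c) :=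
      (abs_mem_Icc_sqrt_iff hc).symm
    _ ↔ 2 * x - s ∈ Set.Icc (-√(s ^ 2 + 4 * c)) (-√(s ^ 2 + 4 * b)) ∨
        2 * x - s ∈ Set.Icc √(s ^ 2 + 4 * b) √(s ^ 2 + 4 * c) :=
      abs_mem_Icc_iff (Real.sqrt_nonneg _)
    _ ↔ _ := by
      simp only [Set.mem_Icc]
      refine or_congr (and_congr ?_ ?_) (and_congr ?_ ?_) <;> constructor <;> intro h <;> linarith

theorem ostrovsky_small_factor_localization_general {lam ξ ξ₁ δ : ℝ}
    (hlam : lam ≠ 0) (hξ : ξ ≠ 0) (hξ₁ : ξ₁ ≠ 0) (hξ₂ : ξ - ξ₁ ≠ 0) (hδ : |δ| < 1) :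
    |1 + 4 / (3 * lam ^ 4 * ξ ^ 2 * ξ₁ * (ξ - ξ₁))| ≤ δ ↔
      ξ₁ ∈ Set.Icc ((ξ - √(ξ ^ 2 + 16 / (3 * (1 - δ) * lam ^ 4 * ξ ^ 2))) / 2)
          ((ξ - √(ξ ^ 2 + 16 / (3 * (1 + δ) * lam ^ 4 * ξ ^ 2))) / 2) ∨
        ξ₁ ∈ Set.Icc ((ξ + √(ξ ^ 2 + 16 / (3 * (1 + δ) * lam ^ 4 * ξ ^ 2))) / 2)
          ((ξ + √(ξ ^ 2 + 16 / (3 * (1 - δ) * lam ^ 4 * ξ ^ 2))) / 2) := by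
  have ha : 0 < 4 / (3 * lam ^ 4 * ξ ^ 2) := by positivity
  have hδ_sub : 0 < 1 - δ := sub_pos.mpr (abs_lt.mp hδ).2
  have hfactor : 4 / (3 * lam ^ 4 * ξ ^ 2 * ξ₁ * (ξ - ξ₁)) =
      4 / (3 * lam ^ 4 * ξ ^ 2) / (ξ₁ * (ξ - ξ₁)) := by rw [div_div, mul_assoc _ ξ₁]
  have hradicand (ε : ℝ) : 16 / (3 * ε * lam ^ 4 * ξ ^ 2) =
      4 * (4 / (3 * lam ^ 4 * ξ ^ 2) / ε) := by ring
  rw [hfactor, abs_one_add_div_le_iff ha (mul_ne_zero hξ₁ hξ₂) hδ,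
    neg_mul_sub_mem_Icc_iff (by positivity), hradicand, hradicand]

/-- Localization of `ξ₁` when the factor `1 + 4/(3λ⁴ξ²ξ₁ξ₂)` from the factorized
resonance identity of the Ostrovsky equation with positive dispersion is small. -/
theorem ostrovsky_small_factor_localization (lam ξ ξ₁ : ℝ)
    (hlam : 1 ≤ lam) (hξ : ξ ≠ 0) (hξ₁ : ξ₁ ≠ 0) (hξ₂ : ξ - ξ₁ ≠ 0)
    (hsmall : |1 + 4 / (3 * lam ^ 4 * ξ ^ 2 * ξ₁ * (ξ - ξ₁))| ≤ 1 / 2) :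
    ((ξ - Real.sqrt (ξ ^ 2 + 32 / (3 * lam ^ 4 * ξ ^ 2))) / 2 ≤ ξ₁ ∧
        ξ₁ ≤ (ξ - Real.sqrt (ξ ^ 2 + 32 / (9 * lam ^ 4 * ξ ^ 2))) / 2) ∨
      ((ξ + Real.sqrt (ξ ^ 2 + 32 / (9 * lam ^ 4 * ξ ^ 2))) / 2 ≤ ξ₁ ∧
        ξ₁ ≤ (ξ + Real.sqrt (ξ ^ 2 + 32 / (3 * lam ^ 4 * ξ ^ 2))) / 2) := by
  have hlam_ne : lam ≠ 0 := (one_pos.trans_le hlam).ne'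
  have hδ : |(1 / 2 : ℝ)| < 1 := abs_lt.mpr (by norm_num)
  have houter : 32 / (3 * lam ^ 4 * ξ ^ 2) = 16 / (3 * (1 - 1 / 2) * lam ^ 4 * ξ ^ 2) := by ring
  have hinner : 32 / (9 * lam ^ 4 * ξ ^ 2) = 16 / (3 * (1 + 1 / 2) * lam ^ 4 * ξ ^ 2) := by ring
  rw [houter, hinner]
  exact (ostrovsky_small_factor_localization_general hlam_ne hξ hξ₁ hξ₂ hδ).mp hsmall
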